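/- arXiv:2407.14091 — 2 statements merged into one kernel-verified Lean document; each statement's English description precedes it below -/
import Mathlib

section
/- For positive integers n, k, d with k > d ≥ 2 and n ≥ 2k+2d-3, every intersecting family F of k-element subsets of {1,...,n} contains a d-element set S ⊆ {1,...,n} with |{T ∈ F : S ⊆ T}| ≤ C(n-d-1, k-d-1). -/
open Finset

lemma flag_nonneg {V : Type*} [NormedAddCommGroup V] [InnerProductSpace ℝ V]
    [FiniteDimensional ℝ V] (B : V →ₗ[ℝ] V) (hB : B.IsSymmetric) (U : ℕ → Submodule ℝ V)
    (hU : Monotone U) (b : ℕ → ℝ) (N : ℕ) (hb : ∀ j ≤ N, 0 ≤ b j)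
    (h0 : ∀ v ∈ U 0, B v = b 0 • v)
    (hs : ∀ j < N, ∀ v ∈ U (j+1), B v - b (j+1) • v ∈ U j) :
    ∀ j ≤ N, ∀ v ∈ U j, 0 ≤ inner ℝ v (B v) := by
  intro j
  induction j with
  | zero =>
    intro h v hv
    rw [h0 v hv, inner_smul_right]
    exact mul_nonneg (hb 0 h) real_inner_self_nonneg
  | succ j ih =>
    intro h v hv
    obtain ⟨g, hg, w, hw, rfl⟩ := (U j).exists_add_mem_mem_orthogonal v
    have hgU : g ∈ U (j+1) := hU (Nat.le_succ j) hg
    have hwU : w ∈ U (j+1) := by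
      have := (U (j+1)).sub_mem hv hgU
      simpa using this
    have hBg : B g ∈ U j := by
      cases j with
      | zero => rw [h0 g hg]; exact (U 0).smul_mem _ hg
      | succ i =>
        have h1 := hU (Nat.le_succ i) (hs i (by omega) g hg)
        have := (U (i+1)).add_mem h1 ((U (i+1)).smul_mem (b (i+1)) hg)
        simpa using this
    have h2 := hs j (by omega) w hwU
    have e1 : inner ℝ (B g) w = 0 := hw _ hBg
    have e2 : inner ℝ g (B w) = 0 := by rw [← hB g w, e1]
    have e3 : inner ℝ w (B g) = 0 := by rw [real_inner_comm, e1]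
    have e4 : inner ℝ w (B w) = b (j+1) * inner ℝ w w := by
      have : inner ℝ w (B w - b (j+1) • w) = 0 := by
        rw [real_inner_comm]; exact hw _ h2
      rw [inner_sub_right, inner_smul_right] at this
      linarith
    rw [map_add, inner_add_left, inner_add_right, inner_add_right, e2, e3, e4]
    have := ih (by omega) g hg
    have := mul_nonneg (hb (j+1) h) (real_inner_self_nonneg (x := w) (F := V))
    linarith

def gcount (n k m i : ℕ) : ℕ := if i ≤ m then (n - k - i).choose (m - i) else 0

lemma count_sets {n : ℕ} (m : ℕ) (I A : Finset (Fin n)) (h : Disjoint I A) :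
    ((powersetCard m (univ : Finset (Fin n))).filter (fun T => I ⊆ T ∧ Disjoint A T)).card
      = gcount n A.card m I.card := by
  unfold gcount
  split_ifs with hi
  · have : (n - A.card - I.card) = ((A ∪ I)ᶜ).card := by
      rw [card_compl, card_union_of_disjoint h.symm, Fintype.card_fin]; omega
    rw [this, ← card_powersetCard]
    refine card_nbij' (fun T => T \ I) (fun R => R ∪ I) ?_ ?_ ?_ ?_
    · intro T hT
      simp only [coe_filter, mem_powersetCard, Set.mem_ofPred_eq, subset_univ, true_and, mem_coe] at hT ⊢
      obtain ⟨hT, h1, h2⟩ := hT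
      refine ⟨?_, by rw [card_sdiff_of_subset h1, hT]⟩
      intro x hx
      simp only [mem_sdiff, mem_compl, mem_union] at hx ⊢
      rintro (h3 | h3)
      · exact disjoint_left.mp h2 h3 hx.1
      · exact hx.2 h3
    · intro R hR
      simp only [coe_filter, mem_powersetCard, Set.mem_ofPred_eq, subset_univ, true_and, mem_coe] at hR ⊢
      obtain ⟨hR, h1⟩ := hR
      have hd : Disjoint R I := by
        rw [disjoint_left]; intro x hx hx2
        have := hR hx
        simp [hx2] at this
      refine ⟨by rw [card_union_of_disjoint hd]; omega, subset_union_right, ?_⟩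
      rw [disjoint_union_right]
      refine ⟨?_, h.symm⟩
      rw [disjoint_left]; intro x hx hx2
      have := hR hx2
      simp [hx] at this
    · intro T hT
      simp only [coe_filter, Set.mem_ofPred_eq] at hT
      exact sdiff_union_of_subset hT.2.1
    · intro R hR
      simp only [mem_coe, mem_powersetCard] at hR
      have hd : Disjoint R I := by
        rw [disjoint_left]; intro x hx hx2
        have := hR.1 hx
        simp [hx2] at this
      simp only [union_sdiff_right]
      exact sdiff_eq_self_of_disjoint hd
  · rw [card_eq_zero, filter_eq_empty_iff]
    intro T hT h2
    rw [mem_powersetCard] at hT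
    have := card_le_card h2.1
    omega

lemma incl_excl {n : ℕ} (J T : Finset (Fin n)) :
    (if Disjoint J T then (1:ℝ) else 0) =
      ∑ I ∈ J.powerset, (-1:ℝ)^I.card * (if I ⊆ T then 1 else 0) := by
  have h1 : ∑ I ∈ J.powerset, (-1:ℝ)^I.card * (if I ⊆ T then 1 else 0)
      = ∑ I ∈ (J ∩ T).powerset, (-1:ℝ)^I.card := by
    simp only [mul_ite, mul_one, mul_zero]
    rw [← sum_filter]
    congr 1
    ext I
    simp only [mem_filter, mem_powerset, subset_inter_iff]
  rw [h1]
  have := sum_powerset_neg_one_pow_card (x := J ∩ T)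
  have h2 : (∑ I ∈ (J ∩ T).powerset, (-1:ℝ)^I.card) = (((if J ∩ T = ∅ then 1 else 0 : ℤ)) : ℝ) := by
    rw [← this]; push_cast; rfl
  rw [h2]
  simp [disjoint_iff_inter_eq_empty]

/-- pairs count -/
lemma pcount {n : ℕ} (m : ℕ) (A J : Finset (Fin n)) :
    ∑ T ∈ powersetCard m (univ : Finset (Fin n)),
      (if Disjoint A T then (1:ℝ) else 0) * (if Disjoint J T then (1:ℝ) else 0)
    = ∑ I ∈ J.powerset, (-1:ℝ)^I.card * gcount n A.card m I.card *
        (if Disjoint I A then (1:ℝ) else 0) := by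
  simp_rw [incl_excl J, mul_sum]
  rw [sum_comm]
  refine sum_congr rfl fun I _ => ?_
  by_cases h : Disjoint I A
  · rw [← count_sets m I A h, card_filter]
    simp only [h, if_true, mul_one, Nat.cast_sum, mul_sum]
    refine sum_congr rfl fun T _ => ?_
    by_cases h1 : I ⊆ T <;> by_cases h2 : Disjoint A T <;> simp [h1, h2]
  · simp only [h, if_false, mul_zero]
    refine sum_eq_zero fun T _ => ?_
    by_cases h1 : I ⊆ T
    · have : ¬ Disjoint A T := fun h2 => h (h2.symm.mono_left h1)
      simp [this]
    · simp [h1]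

lemma choose_sdiff {n : ℕ} (d : ℕ) (A T : Finset (Fin n)) :
    (((T \ A).card.choose d : ℕ) : ℝ) = ∑ S ∈ powersetCard d (univ : Finset (Fin n)),
      (if Disjoint A S then (1:ℝ) else 0) * (if S ⊆ T then (1:ℝ) else 0) := by
  rw [← card_powersetCard]
  have : powersetCard d (T \ A) = (powersetCard d (univ : Finset (Fin n))).filter
      (fun S => Disjoint A S ∧ S ⊆ T) := by
    ext S
    simp only [mem_powersetCard, mem_filter, subset_univ, true_and, subset_sdiff, disjoint_comm (a := S)]
    tauto
  rw [this, card_filter]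
  push_cast
  refine sum_congr rfl fun S _ => ?_
  by_cases h1 : S ⊆ T <;> by_cases h2 : Disjoint A S <;> simp [h1, h2]

lemma mcount {n : ℕ} (k d : ℕ) (A J : Finset (Fin n)) :
    ∑ T ∈ powersetCard k (univ : Finset (Fin n)),
      ((T \ A).card.choose d : ℝ) * (if Disjoint J T then (1:ℝ) else 0)
    = gcount n J.card k d * ∑ I ∈ J.powerset, (-1:ℝ)^I.card * gcount n A.card d I.card *
        (if Disjoint I A then (1:ℝ) else 0) := by
  rw [← pcount]
  simp_rw [choose_sdiff, sum_mul]
  rw [sum_comm, mul_sum]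
  refine sum_congr rfl fun S hS => ?_
  rw [mem_powersetCard] at hS
  by_cases h : Disjoint J S
  · rw [← hS.2, ← count_sets k S J h.symm, card_filter]
    simp only [h, if_true, mul_one, Nat.cast_sum, sum_mul]
    refine sum_congr rfl fun T _ => ?_
    by_cases h1 : S ⊆ T <;> by_cases h2 : Disjoint J T <;> by_cases h3 : Disjoint A S <;> simp [h1, h2, h3]
  · simp only [h, if_false, mul_zero]
    refine sum_eq_zero fun T _ => ?_
    by_cases h1 : S ⊆ T
    · have : ¬ Disjoint J T := fun h2 => h (h2.mono_right h1)
      simp [this]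
    · simp [h1]

noncomputable def sseq (n k d : ℝ) (j : ℕ) : ℝ :=
  (n - k) / (k - d) * ∏ i ∈ range j, (k - i) / (n - k - i)
noncomputable def rseq (n k d : ℝ) (j : ℕ) : ℝ :=
  (n - d) / (k - d) * ∏ i ∈ range j, (d - i) / (n - d - i)

lemma sseq_succ (n k d : ℝ) (j : ℕ) : sseq n k d (j+1) = sseq n k d j * ((k - j) / (n - k - j)) := by
  simp only [sseq, prod_range_succ, mul_assoc]
lemma rseq_succ (n k d : ℝ) (j : ℕ) : rseq n k d (j+1) = rseq n k d j * ((d - j) / (n - d - j)) := by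
  simp only [rseq, prod_range_succ, mul_assoc]

lemma choose_step (a b : ℕ) (ha : 0 < a) (hb : 0 < b) :
    (((a-1).choose (b-1) : ℕ) : ℝ) = (a.choose b : ℝ) * (b / a) := by
  obtain ⟨a, rfl⟩ : ∃ c, a = c + 1 := ⟨a - 1, by omega⟩
  obtain ⟨b, rfl⟩ : ∃ c, b = c + 1 := ⟨b - 1, by omega⟩
  have := Nat.add_one_mul_choose_eq a b
  have h : ((a:ℝ)+1) * (a.choose b : ℝ) = ((a+1).choose (b+1) : ℝ) * (b+1) := by exact_mod_cast this
  simp only [Nat.add_sub_cancel]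
  push_cast
  field_simp
  linarith

lemma choose_step2 (a b : ℕ) (ha : 0 < a) (hb : b ≤ a) :
    (((a-1).choose b : ℕ) : ℝ) = (a.choose b : ℝ) * ((a - b) / a) := by
  obtain ⟨a, rfl⟩ : ∃ c, a = c + 1 := ⟨a - 1, by omega⟩
  have := Nat.choose_mul_succ_eq a b
  have h : (a.choose b : ℝ) * (a+1) = ((a+1).choose b : ℝ) * ((a:ℝ)+1-b) := by
    rw [show ((a:ℝ)+1-b) = ((a+1-b : ℕ):ℝ) by push_cast [hb]; ring]
    exact_mod_cast this
  simp only [Nat.add_sub_cancel]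
  push_cast
  field_simp
  linarith

lemma choose_step3 (a b : ℕ) (hb : 0 < b) (hb2 : b ≤ a) :
    ((a.choose b : ℕ) : ℝ) = (a.choose (b-1) : ℝ) * ((a - b + 1) / b) := by
  obtain ⟨b, rfl⟩ : ∃ c, b = c + 1 := ⟨b - 1, by omega⟩
  have := Nat.choose_succ_right_eq a b
  have h : (a.choose (b+1) : ℝ) * (b+1) = (a.choose b : ℝ) * ((a:ℝ)-b) := by
    rw [show ((a:ℝ)-b) = ((a-b : ℕ):ℝ) by rw [Nat.cast_sub (by omega)]]
    exact_mod_cast this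
  simp only [Nat.add_sub_cancel]
  push_cast
  field_simp
  linarith

lemma lam_eq (n k d : ℕ) (hdk : d < k) (hn : 2 * k < n) (j : ℕ) (hj : j ≤ k) :
    ((n-k).choose d * (n-d-1).choose (k-d) / (n-k).choose k : ℝ) * gcount n k k j
      = ((n-k).choose d * (n-d-1).choose (k-d-1) : ℝ) * sseq n k d j := by
  induction j with
  | zero =>
    have h1 : ((n-k).choose k : ℝ) ≠ 0 := by
      have := Nat.choose_pos (show k ≤ n - k by omega)
      positivity
    have h2 := choose_step3 (n-d-1) (k-d) (by omega) (by omega)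
    rw [Nat.cast_sub (by omega), Nat.cast_sub (by omega), Nat.cast_sub (by omega)] at h2
    simp only [gcount, sseq, h2]
    have : (k:ℝ) - d ≠ 0 := by
      have : (d:ℝ) < k := by exact_mod_cast hdk
      linarith
    simp
    field_simp
    ring
  | succ j ih =>
    rw [sseq_succ, ← mul_assoc, ← ih (by omega)]
    have : (gcount n k k (j+1) : ℝ) = gcount n k k j * (((k:ℝ)-j)/((n:ℝ)-k-j)) := by
      have h := choose_step (n-k-j) (k-j) (by omega) (by omega)
      rw [Nat.cast_sub (by omega), Nat.cast_sub (by omega), Nat.cast_sub (by omega)] at h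
      simp only [gcount, hj, if_true, show j ≤ k by omega]
      rw [← h]; rfl
    rw [this]; ring

lemma m_eq (n k d : ℕ) (hdk : d < k) (hn : 2 * k < n) (j : ℕ) (hj : j ≤ k) :
    (gcount n j k d : ℝ) * gcount n k d j
      = ((n-k).choose d * (n-d-1).choose (k-d-1) : ℝ) * rseq n k d j := by
  induction j with
  | zero =>
    have h2 := choose_step (n-d) (k-d) (by omega) (by omega)
    rw [Nat.cast_sub (by omega), Nat.cast_sub (by omega)] at h2
    simp only [gcount, rseq, h2]
    have : (k:ℝ) - d ≠ 0 := by
      have : (d:ℝ) < k := by exact_mod_cast hdk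
      linarith
    have : (n:ℝ) - d ≠ 0 := by
      have : (d:ℝ) < n := by exact_mod_cast (by omega)
      linarith
    simp [hdk.le]
    field_simp
  | succ j ih =>
    rw [rseq_succ, ← mul_assoc, ← ih (by omega)]
    by_cases hjd : j < d
    · have e1 : (gcount n k d (j+1) : ℝ) = gcount n k d j * (((d:ℝ)-j)/((n:ℝ)-k-j)) := by
        have h := choose_step (n-k-j) (d-j) (by omega) (by omega)
        rw [Nat.cast_sub (by omega), Nat.cast_sub (by omega), Nat.cast_sub (by omega)] at h
        simp only [gcount, if_true, show j ≤ d by omega, show j+1 ≤ d by omega]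
        rw [← h]; rfl
      have e2 : (gcount n (j+1) k d : ℝ) = gcount n j k d * (((n:ℝ)-k-j)/((n:ℝ)-d-j)) := by
        have h := choose_step2 (n-j-d) (k-d) (by omega) (by omega)
        rw [Nat.cast_sub (by omega), Nat.cast_sub (by omega), Nat.cast_sub (by omega)] at h
        simp only [gcount, if_true, hdk.le]
        rw [show n - (j+1) - d = n - j - d - 1 by omega, h]
        congr 1
        congr 1 <;> ring
      rw [e1, e2]
      have : (n:ℝ)-k-j ≠ 0 := by
        have : (k:ℝ) + j < n := by exact_mod_cast (by omega)
        linarith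
      field_simp
    · have e1 : gcount n k d (j+1) = 0 := by simp [gcount]; omega
      rw [e1]
      rcases Nat.eq_or_lt_of_le (not_lt.mp hjd) with h | h
      · subst h; simp
      · have e2 : gcount n k d j = 0 := by simp [gcount]; omega
        simp [e2]

lemma rho_bound (n k d : ℕ) (hd : 2 ≤ d) (hdk : d < k) (hn : 2 * k + 2 * d - 3 ≤ n) (j : ℕ) (hj : 3 ≤ j)
    (hjk : j ≤ k) : 0 ≤ rseq n k d j ∧ 2 * (rseq n k d j * (k - d)) ≤ d - 2 ∧ (d < j → rseq n k d j = 0) := by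
  have hdR : (2:ℝ) ≤ d := by exact_mod_cast hd
  have hdkR : (d:ℝ) + 1 ≤ k := by exact_mod_cast hdk
  have hnR : (2:ℝ) * k + 2 * d - 3 ≤ n := by
    have : 2 * k + 2 * d ≤ n + 3 := by omega
    have : (2:ℝ) * k + 2 * d ≤ n + 3 := by exact_mod_cast this
    linarith
  induction j, hj using Nat.le_induction with
  | base =>
    have e : rseq n k d 3 = d * ((d-1)*(d-2)) / ((k - d) * ((n-d-1)*(n-d-2))) := by
      simp only [rseq, prod_range_succ, prod_range_zero]
      have h1 : (k:ℝ) - d ≠ 0 := by linarith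
      have h2 : (n:ℝ) - d ≠ 0 := by linarith
      have h3 : (n:ℝ) - d - 1 ≠ 0 := by linarith
      have h4 : (n:ℝ) - d - 2 ≠ 0 := by linarith
      push_cast
      field_simp
      ring
    have p1 : 0 < (k:ℝ) - d := by linarith
    have p3 : 0 < (n:ℝ) - d - 1 := by linarith
    have p4 : 0 < (n:ℝ) - d - 2 := by linarith
    have p5 : 0 ≤ (d:ℝ) - 1 := by linarith
    have p6 : 0 ≤ (d:ℝ) - 2 := by linarith
    refine ⟨by rw [e]; positivity, ?_, ?_⟩
    · rw [e]
      have : 2 * ((d:ℝ) * ((d-1)*(d-2)) / ((k - d) * ((n-d-1)*(n-d-2))) * (k-d))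
        = (2 * d * (d-1)) * (d-2) / ((n-d-1)*(n-d-2)) := by field_simp
      rw [this, div_le_iff₀ (by positivity), mul_comm]
      apply mul_le_mul_of_nonneg_left _ p6
      apply mul_le_mul <;> linarith
    · intro h
      have : d = 2 := by omega
      rw [e, this]; simp
  | succ j hj ih =>
    obtain ⟨h1, h2, h3⟩ := ih (by omega)
    rw [rseq_succ]
    rcases lt_or_ge d j with h | h
    · rw [h3 h]; simp; linarith
    · have hR : (j:ℝ) ≤ d := by exact_mod_cast h
      have hj3 : (3:ℝ) ≤ j := by exact_mod_cast hj
      have p1 : 0 < (n:ℝ) - d - j := by linarith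
      have q0 : 0 ≤ ((d:ℝ) - j) / (n - d - j) := div_nonneg (by linarith) p1.le
      have q1 : ((d:ℝ) - j) / (n - d - j) ≤ 1 := by rw [div_le_one p1]; linarith
      refine ⟨mul_nonneg h1 q0, ?_, ?_⟩
      · have : rseq n k d j * (((d:ℝ) - j) / (n - d - j)) ≤ rseq n k d j := mul_le_of_le_one_right h1 q1
        have := mul_le_mul_of_nonneg_right this (show 0 ≤ (k:ℝ) - d by linarith)
        linarith
      · intro h5
        have : d = j := by omega
        rw [this]; simp

lemma poly_ineq (e l m : ℝ) (he : 0 ≤ e) (hl : 0 ≤ l) (hm : 0 ≤ m) (n k d : ℝ) (hd : d = 2 + e)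
    (hk : k = d + 1 + l) (hn : n = 2 * k + 2 * d - 3 + m) :
    (k-1)*(k-2)*(n-d-1)*(n-d-2) + d*(k-1)*(n-4)*(n-d-1) + d*(d-2)*(n-2)*(n-k-2) ≤
      (n-k-1)*(n-k-2)*(n-d-1)*(n-d-2) := by
  rw [← sub_nonneg, hn, hk, hd]
  ring_nf
  positivity

lemma e_bound (n k d : ℕ) (hd : 2 ≤ d) (hdk : d < k) (hn : 2 * k + 2 * d - 3 ≤ n) (j : ℕ) (hj : 3 ≤ j)
    (hjk : j ≤ k) : sseq n k d j - rseq n k d j ≤ 1 := by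
  have hdR : (2:ℝ) ≤ d := by exact_mod_cast hd
  have hdkR : (d:ℝ) + 1 ≤ k := by exact_mod_cast hdk
  have hnR : (2:ℝ) * k + 2 * d - 3 ≤ n := by
    have : 2 * k + 2 * d ≤ n + 3 := by omega
    have : (2:ℝ) * k + 2 * d ≤ n + 3 := by exact_mod_cast this
    linarith
  have p1 : 0 < (k:ℝ) - d := by linarith
  induction j, hj using Nat.le_induction with
  | base =>
    have P := poly_ineq (d-2) (k-d-1) (n - (2*k+2*d-3)) (by linarith) (by linarith) (by linarith)
      n k d (by ring) (by ring) (by ring)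
    have p2 : 0 < (n:ℝ) - d := by linarith
    have p3 : 0 < (n:ℝ) - d - 1 := by linarith
    have p4 : 0 < (n:ℝ) - d - 2 := by linarith
    have p5 : 0 < (n:ℝ) - k := by linarith
    have p6 : 0 < (n:ℝ) - k - 1 := by linarith
    have p7 : 0 < (n:ℝ) - k - 2 := by linarith
    have e : 1 - (sseq n k d 3 - rseq n k d 3) =
      ((n-k-1)*(n-k-2)*(n-d-1)*(n-d-2) - 
       ((k-1)*(k-2)*(n-d-1)*(n-d-2) + d*(k-1)*(n-4)*(n-d-1) + d*(d-2)*(n-2)*(n-k-2)))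
       / ((n-k-1)*(n-k-2)*(n-d-1)*(n-d-2)) := by
      simp only [rseq, sseq, prod_range_succ, prod_range_zero]
      push_cast
      simp only [sub_zero]
      field_simp
      ring
    have : 0 ≤ 1 - (sseq n k d 3 - rseq n k d 3) := by
      rw [e]
      apply div_nonneg (by linarith) (by positivity)
    linarith
  | succ j hj ih =>
    have ih := ih (by omega)
    obtain ⟨h1, h2, h3⟩ := rho_bound n k d hd hdk hn j hj (by omega)
    rw [rseq_succ, sseq_succ]
    have hjR : (j:ℝ) + 1 ≤ k := by exact_mod_cast hjk
    have hj3 : (3:ℝ) ≤ j := by exact_mod_cast hj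
    have q1 : 0 < (n:ℝ) - k - j := by linarith
    have q2 : 0 < (n:ℝ) - d - j := by linarith
    have a0 : 0 ≤ ((k:ℝ) - j) / (n - k - j) := div_nonneg (by linarith) q1.le
    set r := rseq n k d j
    have s1 : sseq n k d j * (((k:ℝ) - j) / (n - k - j)) ≤ (1 + r) * (((k:ℝ) - j) / (n - k - j)) :=
      mul_le_mul_of_nonneg_right (by linarith) a0
    have s2 : (1 + r) * (((k:ℝ) - j) / (n - k - j)) - r * (((d:ℝ) - j) / (n - d - j)) ≤ 1 := by
      have key : r * (k - d) * (n - 2 * j) ≤ (n - 2*k) * (n - d - j) := by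
        have t1 : r * (k - d) * (n - 2 * j) ≤ r * (k-d) * (2 * (n - d - j)) :=
          mul_le_mul_of_nonneg_left (by linarith) (mul_nonneg h1 p1.le)
        have t2 : 2 * (r * (k-d)) * (n - d - j) ≤ (n - 2*k) * (n-d-j) :=
          mul_le_mul_of_nonneg_right (by linarith) q2.le
        linarith
      have e : 1 - ((1 + r) * (((k:ℝ) - j) / (n - k - j)) - r * (((d:ℝ) - j) / (n - d - j)))
        = ((n - 2*k) * (n - d - j) - r * (k - d) * (n - 2 * j)) / ((n-k-j)*(n-d-j)) := by
        field_simp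
        ring
      have : 0 ≤ 1 - ((1 + r) * (((k:ℝ) - j) / (n - k - j)) - r * (((d:ℝ) - j) / (n - d - j))) := by
        rw [e]; exact div_nonneg (by linarith) (by positivity)
      linarith
    linarith

lemma sr_le (n k d : ℕ) (hd : 2 ≤ d) (hdk : d < k) (hn : 2 * k + 2 * d - 3 ≤ n) (j : ℕ) (hj : 1 ≤ j)
    (hjk : j ≤ k) : 0 ≤ rseq n k d j ∧ rseq n k d j ≤ sseq n k d j ∧ (d < j → rseq n k d j = 0) := by
  have hdR : (2:ℝ) ≤ d := by exact_mod_cast hd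
  have hdkR : (d:ℝ) + 1 ≤ k := by exact_mod_cast hdk
  have hnR : (2:ℝ) * k + 2 * d - 3 ≤ n := by
    have : 2 * k + 2 * d ≤ n + 3 := by omega
    have : (2:ℝ) * k + 2 * d ≤ n + 3 := by exact_mod_cast this
    linarith
  have p1 : 0 < (k:ℝ) - d := by linarith
  induction j, hj using Nat.le_induction with
  | base =>
    have p2 : 0 < (n:ℝ) - d := by linarith
    have p5 : 0 < (n:ℝ) - k := by linarith
    have e1 : rseq n k d 1 = d / (k-d) := by simp [rseq]; field_simp
    have e2 : sseq n k d 1 = k / (k-d) := by simp [sseq]; field_simp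
    rw [e1, e2]
    refine ⟨by positivity, by gcongr, fun h => by omega⟩
  | succ j hj ih =>
    obtain ⟨h1, h2, h3⟩ := ih (by omega)
    rw [rseq_succ, sseq_succ]
    have hjR : (j:ℝ) + 1 ≤ k := by exact_mod_cast hjk
    have q1 : 0 < (n:ℝ) - k - j := by linarith
    have q2 : 0 < (n:ℝ) - d - j := by linarith
    have a0 : 0 ≤ ((k:ℝ) - j) / (n - k - j) := div_nonneg (by linarith) q1.le
    rcases lt_or_ge d j with h | h
    · rw [h3 h] at h2 ⊢
      simp
      exact mul_nonneg h2 a0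
    · have hR : (j:ℝ) ≤ d := by exact_mod_cast h
      have b0 : 0 ≤ ((d:ℝ) - j) / (n - d - j) := div_nonneg (by linarith) q2.le
      refine ⟨mul_nonneg h1 b0, ?_, ?_⟩
      · apply mul_le_mul h2 _ b0 (h1.trans h2)
        apply div_le_div₀ <;> linarith
      · intro h5
        have : d = j := by omega
        rw [this]; simp

lemma b_nonneg (n k d : ℕ) (hd : 2 ≤ d) (hdk : d < k) (hn : 2 * k + 2 * d - 3 ≤ n) (j : ℕ)
    (hjk : j ≤ k) : 0 ≤ ((n-k).choose d * (n-d-1).choose (k-d-1) : ℝ)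
      - (-1)^j * ((gcount n j k d : ℝ) * gcount n k d j)
      + (-1)^j * (((n-k).choose d * (n-d-1).choose (k-d) / (n-k).choose k : ℝ) * gcount n k k j) := by
  rw [lam_eq n k d hdk (by omega) j hjk, m_eq n k d hdk (by omega) j hjk]
  set mu := ((n-k).choose d * (n-d-1).choose (k-d-1) : ℝ)
  have hmu : 0 ≤ mu := by positivity
  have hdR : (2:ℝ) ≤ d := by exact_mod_cast hd
  have hdkR : (d:ℝ) + 1 ≤ k := by exact_mod_cast hdk
  have hnR : (2:ℝ) * k + 2 * d - 3 ≤ n := by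
    have : 2 * k + 2 * d ≤ n + 3 := by omega
    have : (2:ℝ) * k + 2 * d ≤ n + 3 := by exact_mod_cast this
    linarith
  have p1 : 0 < (k:ℝ) - d := by linarith
  have p2 : 0 < (n:ℝ) - d := by linarith
  have p5 : 0 < (n:ℝ) - k := by linarith
  have : 0 ≤ mu * (1 + (-1)^j * (sseq n k d j - rseq n k d j)) := by
    apply mul_nonneg hmu
    rcases Nat.even_or_odd j with h | h
    · rw [h.neg_one_pow]
      rcases Nat.eq_zero_or_pos j with h0 | h0
      · subst h0
        have : 1 + 1 * (sseq n k d 0 - rseq n k d 0) = 0 := by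
          simp [sseq, rseq]; field_simp; ring
        rw [this]
      · have := (sr_le n k d hd hdk hn j h0 hjk).2.1
        linarith
    · rw [h.neg_one_pow]
      rcases Nat.lt_or_ge j 3 with h3 | h3
      · have : j = 1 := by
          rcases h with ⟨i, hi⟩; omega
        subst this
        have : 1 + -1 * (sseq n k d 1 - rseq n k d 1) = 0 := by
          simp [sseq, rseq]; field_simp; ring
        rw [this]
      · have := e_bound n k d hd hdk hn j h3 hjk
        linarith
  linarith

/-- indicator of being a `k`-set disjoint from `J` -/
noncomputable def evec (n k : ℕ) (J : Finset (Fin n)) : EuclideanSpace ℝ (Finset (Fin n)) :=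
  WithLp.toLp 2 (fun A => if A.card = k then (if Disjoint J A then (1:ℝ) else 0) else 0)

noncomputable def bmat (n k d : ℕ) (mu c : ℝ) : Matrix (Finset (Fin n)) (Finset (Fin n)) ℝ :=
  fun A T => if A.card = k ∧ T.card = k then
    mu * (if A = T then 1 else 0) - ((T \ A).card.choose d : ℝ) + c * (if Disjoint A T then 1 else 0)
    else 0

noncomputable def bop (n k d : ℕ) (mu c : ℝ) :
    EuclideanSpace ℝ (Finset (Fin n)) →ₗ[ℝ] EuclideanSpace ℝ (Finset (Fin n)) :=
  Matrix.toEuclideanLin (bmat n k d mu c)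

lemma bop_symm (n k d : ℕ) (mu c : ℝ) : (bop n k d mu c).IsSymmetric := by
  unfold bop
  rw [← Matrix.isHermitian_iff_isSymmetric]
  ext A T
  simp only [Matrix.conjTranspose_apply, bmat, star_trivial]
  by_cases h : A.card = k ∧ T.card = k
  · rw [if_pos h, if_pos h.symm, card_sdiff_comm (h.1.trans h.2.symm)]
    simp only [disjoint_comm, eq_comm]
  · rw [if_neg h, if_neg (fun h2 => h h2.symm)]

lemma bop_evec (n k d : ℕ) (mu c : ℝ) (J : Finset (Fin n)) :
    bop n k d mu c (evec n k J) = mu • evec n k J + ∑ I ∈ J.powerset,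
      (-((-1)^I.card * ((gcount n J.card k d : ℝ) * gcount n k d I.card))
        + (-1)^I.card * (c * gcount n k k I.card)) • evec n k I := by
  ext A
  have hL : (bop n k d mu c (evec n k J)) A = ∑ T, bmat n k d mu c A T * evec n k J T := by
    rfl
  rw [hL]
  have hR : (mu • evec n k J + ∑ I ∈ J.powerset,
      (-((-1)^I.card * ((gcount n J.card k d : ℝ) * gcount n k d I.card))
        + (-1)^I.card * (c * gcount n k k I.card)) • evec n k I) A
     = mu * evec n k J A + ∑ I ∈ J.powerset,
      (-((-1)^I.card * ((gcount n J.card k d : ℝ) * gcount n k d I.card))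
        + (-1)^I.card * (c * gcount n k k I.card)) * evec n k I A := by
    simp
  rw [hR]
  by_cases hA : A.card = k
  · have h1 : ∑ T, bmat n k d mu c A T * evec n k J T = ∑ T ∈ powersetCard k (univ : Finset (Fin n)),
        (mu * (if A = T then 1 else 0) - ((T \ A).card.choose d : ℝ) + c * (if Disjoint A T then 1 else 0))
          * (if Disjoint J T then (1:ℝ) else 0) := by
      symm
      rw [← sum_subset (subset_univ (powersetCard k (univ : Finset (Fin n))))]
      · refine sum_congr rfl fun T hT => ?_
        have hT2 := (mem_powersetCard.mp hT).2
        simp [bmat, evec, hA, hT2]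
      · intro T _ hT
        have : T.card ≠ k := fun h => hT (by simp [mem_powersetCard, h])
        simp [bmat, this]
    rw [h1]
    have h2 := pcount k A J
    have h3 := mcount k d A J
    simp_rw [add_mul, sub_mul]
    rw [sum_add_distrib, sum_sub_distrib, h3]
    simp_rw [mul_assoc c]
    rw [← mul_sum, h2]
    have h4 : ∑ T ∈ powersetCard k (univ : Finset (Fin n)),
        mu * (if A = T then 1 else 0) * (if Disjoint J T then (1:ℝ) else 0)
        = mu * (if Disjoint J A then (1:ℝ) else 0) := by
      rw [sum_eq_single A]
      · simp
      · intro T _ hT; simp [Ne.symm hT]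
      · intro h; exact absurd (by simp [mem_powersetCard, hA]) h
    rw [h4]
    have h5 : ∀ I, evec n k I A = if Disjoint I A then (1:ℝ) else 0 := by
      intro I; simp [evec, hA]
    simp_rw [h5, hA]
    rw [mul_sum, mul_sum, sub_add, ← sum_sub_distrib, sub_eq_add_neg, ← sum_neg_distrib]
    congr 1
    refine sum_congr rfl fun I _ => ?_
    ring
  · simp [bmat, evec, hA]

noncomputable def uspan (n k j : ℕ) : Submodule ℝ (EuclideanSpace ℝ (Finset (Fin n))) :=
  Submodule.span ℝ {v | ∃ J : Finset (Fin n), J.card ≤ j ∧ v = evec n k J}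

lemma evec_mem {n k j : ℕ} {J : Finset (Fin n)} (h : J.card ≤ j) : evec n k J ∈ uspan n k j :=
  Submodule.subset_span ⟨J, h, rfl⟩

lemma uspan_mono (n k : ℕ) : Monotone (uspan n k) := by
  intro i j hij
  apply Submodule.span_mono
  rintro v ⟨J, hJ, rfl⟩
  exact ⟨J, hJ.trans hij, rfl⟩

lemma single_mem (n k : ℕ) (T : Finset (Fin n)) (hT : T.card = k) :
    EuclideanSpace.single T (1:ℝ) ∈ uspan n k k := by
  have : EuclideanSpace.single T (1:ℝ) = ∑ I ∈ T.powerset, ((-1:ℝ)^I.card) • evec n k I := by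
    ext A
    have hR : (∑ I ∈ T.powerset, ((-1:ℝ)^I.card) • evec n k I) A
        = ∑ I ∈ T.powerset, ((-1:ℝ)^I.card) * evec n k I A := by simp
    rw [hR]
    by_cases hA : A.card = k
    · have h5 : ∀ I, evec n k I A = if I ⊆ Aᶜ then (1:ℝ) else 0 := by
        intro I; simp [evec, hA, subset_compl_iff_disjoint_right]
      simp_rw [h5]
      rw [← incl_excl]
      have : Disjoint T Aᶜ ↔ A = T := by
        rw [← subset_compl_iff_disjoint_right, compl_compl]
        constructor
        · intro h; exact (eq_of_subset_of_card_le h (by omega)).symm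
        · rintro rfl; rfl
      simp [this, Pi.single_apply]
    · have : A ≠ T := fun h => hA (h ▸ hT)
      simp [evec, hA, this]
  rw [this]
  refine Submodule.sum_mem _ fun I hI => Submodule.smul_mem _ _ (evec_mem ?_)
  rw [mem_powerset] at hI
  exact (card_le_card hI).trans hT.le

lemma bop_sub (n k d : ℕ) (mu c : ℝ) (J : Finset (Fin n)) :
    bop n k d mu c (evec n k J) - (mu - (-1)^J.card * ((gcount n J.card k d : ℝ) * gcount n k d J.card)
        + (-1)^J.card * (c * gcount n k k J.card)) • evec n k J = ∑ I ∈ J.ssubsets,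
      (-((-1)^I.card * ((gcount n J.card k d : ℝ) * gcount n k d I.card))
        + (-1)^I.card * (c * gcount n k k I.card)) • evec n k I := by
  rw [bop_evec, ssubsets, ← add_sum_erase _ _ (mem_powerset_self J)]
  module

lemma quad_nonneg (n k d : ℕ) (hd : 2 ≤ d) (hdk : d < k) (hn : 2 * k + 2 * d - 3 ≤ n)
    (v : EuclideanSpace ℝ (Finset (Fin n))) (hv : v ∈ uspan n k k) :
    0 ≤ inner ℝ v (bop n k d ((n-k).choose d * (n-d-1).choose (k-d-1) : ℝ)
      ((n-k).choose d * (n-d-1).choose (k-d) / (n-k).choose k : ℝ) v) := by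
  set mu := ((n-k).choose d * (n-d-1).choose (k-d-1) : ℝ) with hmu
  set c := ((n-k).choose d * (n-d-1).choose (k-d) / (n-k).choose k : ℝ) with hc
  refine flag_nonneg (bop n k d mu c) (bop_symm n k d mu c) (uspan n k) (uspan_mono n k)
    (fun j => mu - (-1)^j * ((gcount n j k d : ℝ) * gcount n k d j)
        + (-1)^j * (c * gcount n k k j)) k (fun j hj => b_nonneg n k d hd hdk hn j hj) ?_ ?_ k le_rfl v hv
  · intro v hv
    induction hv using Submodule.span_induction with
    | mem x hx =>
      obtain ⟨J, hJ, rfl⟩ := hx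
      have hJ0 : J = ∅ := by simpa using hJ
      have := bop_sub n k d mu c J
      subst hJ0
      rw [show (∅ : Finset (Fin n)).ssubsets = ∅ from rfl, sum_empty, sub_eq_zero] at this
      simpa using this
    | zero => simp
    | add x y _ _ hx hy => rw [map_add, hx, hy, smul_add]
    | smul a x _ hx => rw [map_smul, hx, smul_comm]
  · intro j hj v hv
    induction hv using Submodule.span_induction with
    | mem x hx =>
      obtain ⟨J, hJ, rfl⟩ := hx
      have hss : ∀ i, J.card ≤ i + 1 → ∑ I ∈ J.ssubsets,
        (-((-1)^I.card * ((gcount n J.card k d : ℝ) * gcount n k d I.card))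
        + (-1)^I.card * (c * gcount n k k I.card)) • evec n k I ∈ uspan n k i := by
        intro i hi
        refine Submodule.sum_mem _ fun I hI => Submodule.smul_mem _ _ (evec_mem ?_)
        have := card_lt_card (mem_ssubsets.mp hI)
        omega
      rcases Nat.eq_or_lt_of_le hJ with h | h
      · have := bop_sub n k d mu c J
        rw [h] at this
        have h2 := hss j hJ
        rw [h] at h2
        rw [← this] at h2
        exact h2
      · have h2 := hss j hJ
        rw [← bop_sub n k d mu c J] at h2
        have h3 : evec n k J ∈ uspan n k j := evec_mem (by omega)
        have h4 := Submodule.add_mem _ h2 (Submodule.smul_mem _ (mu - (-1)^J.card * ((gcount n J.card k d : ℝ) * gcount n k d J.card)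
        + (-1)^J.card * (c * gcount n k k J.card)) h3)
        rw [sub_add_cancel] at h4
        exact Submodule.sub_mem _ h4 (Submodule.smul_mem _ _ h3)
    | zero => simp
    | add x y _ _ hx hy =>
      have := Submodule.add_mem _ hx hy
      rw [map_add, smul_add]
      convert this using 1
      module
    | smul a x _ hx =>
      have := Submodule.smul_mem _ a hx
      rw [map_smul, smul_comm]
      convert this using 1
      module

theorem stmt_15 (n k d : ℕ) (hd : 2 ≤ d) (hdk : d < k) (hn : 2 * k + 2 * d - 3 ≤ n)
    (F : Finset (Finset (Fin n)))
    (hcard : ∀ A ∈ F, A.card = k)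
    (hint : ∀ A ∈ F, ∀ B ∈ F, (A ∩ B).Nonempty) :
    ∃ S : Finset (Fin n), S.card = d ∧
      (F.filter (fun T => S ⊆ T)).card ≤ Nat.choose (n - d - 1) (k - d - 1) := by
  by_contra hcon
  push Not at hcon
  have hne : F.Nonempty := by
    obtain ⟨S, hS⟩ := exists_subset_card_eq (s := (univ : Finset (Fin n))) (n := d) (by simp; omega)
    have := hcon S hS.2
    by_contra h
    rw [not_nonempty_iff_eq_empty] at h
    subst h
    simp at this
  have hv : (∑ T ∈ F, EuclideanSpace.single T (1:ℝ)) ∈ uspan n k k :=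
    Submodule.sum_mem _ fun T hT => single_mem n k T (hcard T hT)
  have hq := quad_nonneg n k d hd hdk hn _ hv
  set mu := ((n-k).choose d * (n-d-1).choose (k-d-1) : ℝ) with hmu
  set c := ((n-k).choose d * (n-d-1).choose (k-d) / (n-k).choose k : ℝ) with hc
  have e1 : inner ℝ (∑ T ∈ F, EuclideanSpace.single T (1:ℝ)) (bop n k d mu c (∑ T ∈ F, EuclideanSpace.single T (1:ℝ)))
      = ∑ A ∈ F, ∑ T ∈ F, bmat n k d mu c A T := by
    rw [map_sum, sum_inner]
    refine sum_congr rfl fun A _ => ?_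
    rw [inner_sum]
    refine sum_congr rfl fun T _ => ?_
    rw [EuclideanSpace.inner_single_left]
    simp [bop, Matrix.toLpLin_apply]
  have e2 : ∀ A ∈ F, ∑ T ∈ F, bmat n k d mu c A T = mu - ∑ T ∈ F, ((T \ A).card.choose d : ℝ) := by
    intro A hA
    have : ∀ T ∈ F, bmat n k d mu c A T = (if A = T then mu else 0) - ((T \ A).card.choose d : ℝ) := by
      intro T hT
      have hnd : ¬ Disjoint A T := by
        rw [disjoint_iff_inter_eq_empty]
        exact (hint A hA T hT).ne_empty
      simp [bmat, hcard A hA, hcard T hT, hnd]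
    rw [sum_congr rfl this, sum_sub_distrib, sum_ite_eq, if_pos hA]
  have e3 : ∀ A ∈ F, mu < ∑ T ∈ F, ((T \ A).card.choose d : ℝ) := by
    intro A hA
    simp_rw [choose_sdiff]
    rw [sum_comm]
    have h1 : ∀ S ∈ powersetCard d (univ : Finset (Fin n)),
        ∑ T ∈ F, (if Disjoint A S then (1:ℝ) else 0) * (if S ⊆ T then (1:ℝ) else 0)
        = if Disjoint A S then ((F.filter (fun T => S ⊆ T)).card : ℝ) else 0 := by
      intro S _
      rw [← mul_sum, sum_boole]
      split_ifs <;> simp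
    rw [sum_congr rfl h1, ← sum_filter]
    have h2 : (powersetCard d (univ : Finset (Fin n))).filter (fun S => Disjoint A S)
        = powersetCard d Aᶜ := by
      ext S
      simp only [mem_filter, mem_powersetCard, subset_univ, true_and,
        subset_compl_iff_disjoint_left]
      tauto
    rw [h2]
    have h3 : (powersetCard d Aᶜ).card = (n-k).choose d := by
      rw [card_powersetCard, card_compl, Fintype.card_fin, hcard A hA]
    have h4 : (powersetCard d Aᶜ).Nonempty := by
      rw [← card_pos, h3]; exact Nat.choose_pos (by omega)
    calc mu = ∑ S ∈ powersetCard d Aᶜ, ((n-d-1).choose (k-d-1) : ℝ) := by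
          rw [sum_const, h3, nsmul_eq_mul]
      _ < _ := by
          apply sum_lt_sum_of_nonempty h4
          intro S hS
          exact_mod_cast hcon S (mem_powersetCard.mp hS).2
  rw [e1, sum_congr rfl e2] at hq
  have : ∑ A ∈ F, (mu - ∑ T ∈ F, ((T \ A).card.choose d : ℝ)) < ∑ A ∈ F, (0:ℝ) :=
    sum_lt_sum_of_nonempty hne fun A hA => by linarith [e3 A hA]
  simp only [sum_const_zero] at this
  linarith
end

section
/- For integers n, k, d, i with 0 ≤ j ≤ i ≤ d < k ≤ n/2 and any vector v in the eigenspace E_j of the Kneser graph K(n,k), one has W_{i,k}^T W_{i,k} v = C(k-j, k-i)·C(n-i-j, k-i)·v, and W_{i,k}^T W_{i,k} v = 0 whenever j > i. -/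
/-- The inclusion matrix `W_{i,k}` with rows indexed by `i`-subsets and columns by
`k`-subsets of `[n]`, whose `(S,T)`-entry is `1` iff `S ⊆ T`. -/
def inclMatrix (n i k : ℕ) :
    Matrix {S : Finset (Fin n) // S.card = i} {T : Finset (Fin n) // T.card = k} ℝ :=
  fun S T => if S.1 ⊆ T.1 then 1 else 0

theorem aux_sum_subtype (n k : ℕ) (p : Finset (Fin n) → Prop) [DecidablePred p] :
    (∑ x : {S : Finset (Fin n) // S.card = k}, if p x.1 then (1 : ℝ) else 0) =
      (((Finset.univ : Finset (Finset (Fin n))).filter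
        (fun S => S.card = k ∧ p S)).card : ℝ) := by
  rw [← Finset.sum_subtype (p := fun S : Finset (Fin n) => S.card = k)
    ((Finset.univ : Finset (Finset (Fin n))).filter (fun S => S.card = k)) (by simp)
    (fun S => if p S then (1 : ℝ) else 0)]
  rw [Finset.sum_boole, Finset.filter_filter]

theorem aux_count (n i : ℕ) (M T : Finset (Fin n)) (hMT : M ⊆ T) (hM : M.card ≤ i) :
    ((Finset.univ : Finset (Finset (Fin n))).filter
        (fun S => S.card = i ∧ (M ⊆ S ∧ S ⊆ T))).card
      = (T.card - M.card).choose (i - M.card) := by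
  rw [← Finset.card_sdiff_of_subset hMT, ← Finset.card_powersetCard]
  refine Finset.card_bij' (fun S _ => S \ M) (fun S _ => S ∪ M) ?_ ?_ ?_ ?_
  · intro S hS
    simp only [Finset.mem_filter, Finset.mem_univ, true_and] at hS
    rw [Finset.mem_powersetCard, Finset.card_sdiff_of_subset hS.2.1, hS.1]
    exact ⟨Finset.sdiff_subset_sdiff hS.2.2 le_rfl, rfl⟩
  · intro S hS
    rw [Finset.mem_powersetCard] at hS
    simp only [Finset.mem_filter, Finset.mem_univ, true_and]
    have hd : Disjoint S M := Finset.disjoint_of_subset_left hS.1 Finset.sdiff_disjoint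
    refine ⟨?_, Finset.subset_union_right,
      Finset.union_subset (hS.1.trans Finset.sdiff_subset) hMT⟩
    rw [Finset.card_union_of_disjoint hd, hS.2]
    omega
  · intro S hS
    simp only [Finset.mem_filter, Finset.mem_univ, true_and] at hS
    exact Finset.sdiff_union_of_subset hS.2.1
  · intro S hS
    rw [Finset.mem_powersetCard] at hS
    have hd : Disjoint S M := Finset.disjoint_of_subset_left hS.1 Finset.sdiff_disjoint
    exact Finset.union_sdiff_cancel_right hd

/-- `W_{m,i} W_{i,k} = C(k-m,i-m) W_{m,k}`. -/
theorem aux_mul (n m i k : ℕ) (hmi : m ≤ i) :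
    inclMatrix n m i * inclMatrix n i k = ((k - m).choose (i - m) : ℝ) • inclMatrix n m k := by
  ext M T
  simp only [Matrix.mul_apply, Matrix.smul_apply, inclMatrix, smul_eq_mul]
  have h1 : ∀ x : {S : Finset (Fin n) // S.card = i},
      ((if M.1 ⊆ x.1 then (1 : ℝ) else 0) * (if x.1 ⊆ T.1 then 1 else 0)) =
      if (M.1 ⊆ x.1 ∧ x.1 ⊆ T.1) then 1 else 0 := by
    intro x
    by_cases h : M.1 ⊆ x.1 <;> by_cases h' : x.1 ⊆ T.1 <;> simp [h, h']
  rw [Finset.sum_congr rfl (fun x _ => h1 x),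
    aux_sum_subtype n i (fun S => M.1 ⊆ S ∧ S ⊆ T.1)]
  by_cases hMT : M.1 ⊆ T.1
  · rw [aux_count n i M.1 T.1 hMT (by rw [M.2]; exact hmi), M.2, T.2]
    simp [hMT]
  · rw [Finset.card_eq_zero.mpr]
    · simp [hMT]
    · rw [Finset.filter_eq_empty_iff]
      rintro S _ ⟨_, h, h'⟩
      exact hMT (h.trans h')

theorem aux_gram (n m i j : ℕ) (S : {S : Finset (Fin n) // S.card = i})
    (J : {S : Finset (Fin n) // S.card = j}) :
    ((inclMatrix n m i).transpose * inclMatrix n m j) S J = ((S.1 ∩ J.1).card.choose m : ℝ) := by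
  simp only [Matrix.mul_apply, Matrix.transpose_apply, inclMatrix]
  have h1 : ∀ x : {S : Finset (Fin n) // S.card = m},
      ((if x.1 ⊆ S.1 then (1 : ℝ) else 0) * (if x.1 ⊆ J.1 then 1 else 0)) =
      if (x.1 ⊆ S.1 ∧ x.1 ⊆ J.1) then 1 else 0 := by
    intro x
    by_cases h : x.1 ⊆ S.1 <;> by_cases h' : x.1 ⊆ J.1 <;> simp [h, h']
  rw [Finset.sum_congr rfl (fun x _ => h1 x),
    aux_sum_subtype n m (fun x => x ⊆ S.1 ∧ x ⊆ J.1), ← Finset.card_powersetCard]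
  congr 2
  ext x
  simp [Finset.mem_powersetCard, Finset.subset_inter_iff, and_comm]

theorem aux_star (n k i j : ℕ) (hkn : k ≤ n) (S : {S : Finset (Fin n) // S.card = i})
    (J : {S : Finset (Fin n) // S.card = j}) :
    (inclMatrix n i k * (inclMatrix n j k).transpose) S J
      = ((n - (S.1 ∪ J.1).card).choose (n - k) : ℝ) := by
  simp only [Matrix.mul_apply, Matrix.transpose_apply, inclMatrix]
  have h1 : ∀ x : {S : Finset (Fin n) // S.card = k},
      ((if S.1 ⊆ x.1 then (1 : ℝ) else 0) * (if J.1 ⊆ x.1 then 1 else 0)) =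
      if (S.1 ∪ J.1 ⊆ x.1 ∧ x.1 ⊆ Finset.univ) then 1 else 0 := by
    intro x
    by_cases h : S.1 ⊆ x.1 <;> by_cases h' : J.1 ⊆ x.1 <;> simp [h, h', Finset.union_subset_iff]
  rw [Finset.sum_congr rfl (fun x _ => h1 x),
    aux_sum_subtype n k (fun x => S.1 ∪ J.1 ⊆ x ∧ x ⊆ Finset.univ)]
  by_cases hc : (S.1 ∪ J.1).card ≤ k
  · rw [aux_count n k _ _ (Finset.subset_univ _) hc, Finset.card_univ, Fintype.card_fin]
    congr 1
    apply Nat.choose_symm_of_eq_add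
    omega
  · have hn : (S.1 ∪ J.1).card ≤ n := by simpa using Finset.card_le_univ (S.1 ∪ J.1)
    have hlt : n - (S.1 ∪ J.1).card < n - k := by omega
    rw [Finset.card_eq_zero.mpr, Nat.choose_eq_zero_of_lt hlt]
    rw [Finset.filter_eq_empty_iff]
    rintro x _ ⟨h, h', _⟩
    exact hc (h ▸ Finset.card_le_card h')

theorem aux_expand (n k i j : ℕ) (hkn : 2 * k ≤ n) (hi : i ≤ k) (hj : j ≤ k) :
    inclMatrix n i k * (inclMatrix n j k).transpose =
      ∑ m ∈ Finset.range (n - k + 1), ((n - i - j).choose (n - k - m) : ℝ) •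
        ((inclMatrix n m i).transpose * inclMatrix n m j) := by
  ext S J
  rw [aux_star n k i j (by omega), Matrix.sum_apply]
  simp only [Matrix.smul_apply, aux_gram, smul_eq_mul]
  have hc := Finset.card_union_add_card_inter S.1 J.1
  rw [S.2, J.2] at hc
  have hle : (S.1 ∩ J.1).card ≤ i :=
    (Finset.card_le_card Finset.inter_subset_left).trans S.2.le
  have : n - (S.1 ∪ J.1).card = (S.1 ∩ J.1).card + (n - i - j) := by omega
  rw [this, Nat.add_choose_eq, Finset.Nat.sum_antidiagonal_eq_sum_range_succ_mk]
  push_cast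
  exact Finset.sum_congr rfl (fun m _ => mul_comm _ _)

theorem aux_zero (n m j : ℕ) (h : j < m) : inclMatrix n m j = 0 := by
  ext M J
  simp only [inclMatrix, Matrix.zero_apply, ite_eq_right_iff]
  intro hs
  have := Finset.card_le_card hs
  rw [M.2, J.2] at this
  omega

theorem aux_self (n m : ℕ) : inclMatrix n m m = 1 := by
  ext M J
  simp only [inclMatrix, Matrix.one_apply]
  congr 1
  rw [Subtype.ext_iff, eq_iff_iff]
  constructor
  · intro h
    exact Finset.eq_of_subset_of_card_le h (by rw [M.2, J.2])
  · intro h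
    rw [h]

theorem aux_kernel (n k j : ℕ) (hkn : 2 * k ≤ n) (hjk : j ≤ k)
    (u : {S : Finset (Fin n) // S.card = j} → ℝ)
    (hv : ∀ m : ℕ, m < j →
      (inclMatrix n m k).mulVec ((inclMatrix n j k).transpose.mulVec u) = 0)
    (m : ℕ) (hm : m < j) : (inclMatrix n m j).mulVec u = 0 := by
  induction m using Nat.strong_induction_on with
  | _ m ih =>
    have h := hv m hm
    rw [Matrix.mulVec_mulVec, aux_expand n k m j hkn (by omega) hjk, Matrix.sum_mulVec,
      Finset.sum_eq_single m] at h
    · rw [Matrix.smul_mulVec, aux_self, Matrix.transpose_one, Matrix.one_mul] at h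
      refine (smul_eq_zero.mp h).resolve_left ?_
      have : 0 < (n - m - j).choose (n - k - m) := Nat.choose_pos (by omega)
      exact_mod_cast this.ne'
    · intro l _ hl
      rcases lt_or_gt_of_ne hl with hl | hl
      · rw [Matrix.smul_mulVec, ← Matrix.mulVec_mulVec, ih l hl (by omega), Matrix.mulVec_zero,
          smul_zero]
      · rw [aux_zero n l m hl]
        simp
    · intro h'
      exact absurd (Finset.mem_range.mpr (by omega)) h'

theorem stmt_17 (n k d i j : ℕ) (hid : i ≤ d) (hdk : d < k) (hkn : 2 * k ≤ n) (hjk : j ≤ k)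
    (v : {T : Finset (Fin n) // T.card = k} → ℝ)
    -- `v` lies in the span of indicators of `j`-stars:
    (hvF : ∃ u : {S : Finset (Fin n) // S.card = j} → ℝ,
      v = (inclMatrix n j k).transpose.mulVec u)
    -- `v` is orthogonal to the span of indicators of `m`-stars for all `m < j`:
    (hvE : ∀ m : ℕ, m < j → (inclMatrix n m k).mulVec v = 0) :
    (j ≤ i →
      ((inclMatrix n i k).transpose * inclMatrix n i k).mulVec v =
        ((Nat.choose (k - j) (k - i) : ℝ) * (Nat.choose (n - i - j) (k - i) : ℝ)) • v) ∧
    (i < j → ((inclMatrix n i k).transpose * inclMatrix n i k).mulVec v = 0) := by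
  obtain ⟨u, rfl⟩ := hvF
  constructor
  · intro hji
    rw [← Matrix.mulVec_mulVec, Matrix.mulVec_mulVec _ (inclMatrix n i k),
      aux_expand n k i j hkn (by omega) hjk, Matrix.sum_mulVec, Finset.sum_eq_single j]
    · rw [aux_self, Matrix.mul_one, Matrix.smul_mulVec, Matrix.mulVec_smul,
        Matrix.mulVec_mulVec, ← Matrix.transpose_mul, aux_mul n j i k hji,
        Matrix.transpose_smul, Matrix.smul_mulVec, smul_smul, mul_comm]
      have e1 : (k - j).choose (i - j) = (k - j).choose (k - i) :=
        Nat.choose_symm_of_eq_add (by omega)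
      have e2 : (n - i - j).choose (n - k - j) = (n - i - j).choose (k - i) :=
        Nat.choose_symm_of_eq_add (by omega)
      rw [e1, e2]
    · intro m _ hm
      rcases lt_or_gt_of_ne hm with hm | hm
      · rw [Matrix.smul_mulVec, ← Matrix.mulVec_mulVec, aux_kernel n k j hkn hjk u hvE m hm,
          Matrix.mulVec_zero, smul_zero]
      · rw [aux_zero n m j hm]
        simp
    · intro h'
      exact absurd (Finset.mem_range.mpr (by omega)) h'
  · intro hij
    rw [← Matrix.mulVec_mulVec, hvE i hij, Matrix.mulVec_zero]
end
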